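/- Let 0 < θ < 1, let 1 ≤ q₀, q₁ < ∞ be constants, let p₀ be a globally log-Hölder continuous exponent with 1 ≤ p₀⁻ ≤ p₀⁺ < ∞, and let α₀, α₁ : ℝ^n → ℝ be locally log-Hölder continuous. Define 1/p(·) := (1−θ)/p₀(·), 1/q := (1−θ)/q₀ + θ/q₁, and α(·) := (1−θ)α₀(·) + θα₁(·). Then there exists a constant C > 0 such that for every complex sequence λ with 0 < ‖λ‖_{f^{α(·)}_{p(·),q}} < ∞ there exist nonnegative sequences λ⁰, λ¹ indexed by ℕ₀ × ℤ^n with |λ_{j,m}| ≤ ‖λ‖_{f^{α(·)}_{p(·),q}} (λ⁰_{j,m})^{1−θ} (λ¹_{j,m})^{θ} for all j ∈ ℕ₀ and m ∈ ℤ^n, and ‖λ⁰‖_{f^{α₀(·)}_{p₀(·),q₀}} ≤ C and ‖λ¹‖_{f^{α₁(·)}_{∞,q₁}} ≤ C. -/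

import Mathlib

open MeasureTheory ENNReal Real Set

noncomputable section

/-- Euclidean space ℝ^n. -/
abbrev En (n : ℕ) := EuclideanSpace ℝ (Fin n)

/-- `g` is locally log-Hölder continuous with constant `c`. -/
def LocLogHolder {n : ℕ} (c : ℝ) (g : En n → ℝ) : Prop :=
  0 < c ∧ ∀ x y : En n, |g x - g y| ≤ c / Real.log (Real.exp 1 + 1 / ‖x - y‖)

/-- `g` is globally log-Hölder continuous with local constant `c`. -/
def GlobLogHolder {n : ℕ} (c : ℝ) (g : En n → ℝ) : Prop :=
  LocLogHolder c g ∧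
    ∃ (gi cd : ℝ), 0 < cd ∧ ∀ x : En n, |g x - gi| ≤ cd / Real.log (Real.exp 1 + ‖x‖)

/-- The kernel η_{v,h}(x) = 2^{nv} (1 + 2^v |x|)^{-h}. -/
def eta (n : ℕ) (v : ℕ) (h : ℝ) (x : En n) : ℝ :=
  (2 : ℝ) ^ (n * v) * (1 + (2 : ℝ) ^ v * ‖x‖) ^ (-h)

/-- The dyadic cube Q_{v,m}. -/
def dyadicCube (n : ℕ) (v : ℤ) (m : Fin n → ℤ) : Set (En n) :=
  {x | ∀ i, (m i : ℝ) ≤ (2 : ℝ) ^ v * x i ∧ (2 : ℝ) ^ v * x i < m i + 1}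

/-- Luxemburg (quasi-)norm of an ℝ≥0∞-valued function with variable exponent `p`. -/
def luxNorm {n : ℕ} (p : En n → ℝ) (F : En n → ℝ≥0∞) : ℝ≥0∞ :=
  sInf {c : ℝ≥0∞ | 0 < c ∧ ∫⁻ x, (F x / c) ^ p x ≤ 1}

/-- The mixed Lebesgue-sequence space norm ‖(F_v)_v‖_{L^{p(·)}(ℓ_{q(·)})}. -/
def mixedNorm {n : ℕ} (p q : En n → ℝ) (F : ℕ → En n → ℝ≥0∞) : ℝ≥0∞ :=
  luxNorm p fun x => (∑' v : ℕ, F v x ^ q x) ^ (1 / q x)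

/-- The sequence space norm ‖λ‖_{f^{α(·)}_{p(·),q(·)}}. -/
def seqNorm {n : ℕ} (α p q : En n → ℝ) (lam : ℕ → (Fin n → ℤ) → ℂ) : ℝ≥0∞ :=
  mixedNorm p q fun v x =>
    ∑' m : Fin n → ℤ,
      ENNReal.ofReal ((2 : ℝ) ^ ((v : ℝ) * (α x + n / 2)) * ‖lam v m‖) *
        (dyadicCube n (v : ℤ) m).indicator (fun _ => (1 : ℝ≥0∞)) x

/-- The sequence space norm ‖λ‖_{f^{α(·)}_{∞,q}}. -/
def seqNormInf {n : ℕ} (α : En n → ℝ) (q : ℝ) (lam : ℕ → (Fin n → ℤ) → ℂ) : ℝ≥0∞ :=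
  ⨆ (vQ : ℤ) (mQ : Fin n → ℤ),
    volume (dyadicCube n vQ mQ) ^ (-(1 / q)) *
      (∑' v : ℕ, if vQ ≤ (v : ℤ) then
          ∫⁻ x in dyadicCube n vQ mQ,
            ∑' m : Fin n → ℤ,
              ENNReal.ofReal ((2 : ℝ) ^ ((v : ℝ) * (α x + n / 2) * q) * ‖lam v m‖ ^ q) *
                (dyadicCube n (v : ℤ) m).indicator (fun _ => (1 : ℝ≥0∞)) x
        else 0) ^ (1 / q)

/-- The Calderón product (quasi-)norm associated to two sequence space norms. -/
def calderonNorm {n : ℕ} (N0 N1 : (ℕ → (Fin n → ℤ) → ℂ) → ℝ≥0∞) (θ : ℝ)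
    (lam : ℕ → (Fin n → ℤ) → ℂ) : ℝ≥0∞ :=
  sInf {M : ℝ≥0∞ | ∃ μ ν : ℕ → (Fin n → ℤ) → ℂ, N0 μ ≤ 1 ∧ N1 ν ≤ 1 ∧
    ∀ v m, ENNReal.ofReal ‖lam v m‖ ≤
      M * ENNReal.ofReal ‖μ v m‖ ^ (1 - θ) * ENNReal.ofReal ‖ν v m‖ ^ θ}

/-!
Up to constants the sequence space norms depend on `α` only through the weights at one point of
each cube, since log-Hölder continuity keeps `2^{vα(·)}` essentially constant on cubes of level
`v`. This reduces the claim to unweighted coefficients `a_{v,m} ≥ 0`. Let `F = (∑_v a_v^q)^{1/q}`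
and let `M_{v,m}` be the median of `F` over `Q_{v,m}`. Then `a_{v,m} ≤ M_{v,m}`, and `a =
(a^{q/q₀} M^γ)^{1-θ} ((a/M)^{q/q₁})^θ` for the exponent `γ` that makes the powers of `M` cancel.

The second factor satisfies a Carleson condition: `F ≤ M_{v,m}` on at least half of `Q_{v,m}`, so
each integral over a cube may be restricted to that half, and there `∑_v (a_v/M_v)^q ≤ 1`. The
first factor has `q₀`-square function at most `F^{q/q₀} (sup_v M_v)^γ`, so it remains to bound the
modular of the median maximal function `sup_v M_v`. If it exceeds a level at `x`, then `F` exceeds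
it on half of a cube around `x`; log-Hölder continuity of `p` exchanges `t^{p(x)}` for `t^{p(y)}`
plus an integrable error there, and the sets in question have comparable measure because the
maximal cubes are disjoint. Since medians replace averages, this works for every exponent bounded
away from `0`.
-/

section

variable {n : ℕ}

/-! ### Dyadic cubes -/

/-- The index `m` of the dyadic cube `Q_{v,m}` of level `v` that contains `x`. Families indexed by
the cubes of a level become functions on `ℝⁿ` by composition with it. -/
def dyadicIndex (v : ℤ) (x : En n) : Fin n → ℤ := fun i => ⌊(2 : ℝ) ^ v * x i⌋

/-- The corner `2^{-v} m` of `Q_{v,m}`: the point at which variable weights are frozen. -/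
def dyadicCorner (v : ℤ) (m : Fin n → ℤ) : En n := WithLp.toLp 2 fun i => (2 : ℝ) ^ (-v) * m i

lemma mem_dyadicCube_iff {v : ℤ} {m : Fin n → ℤ} {x : En n} :
    x ∈ dyadicCube n v m ↔ dyadicIndex v x = m := by
  simp only [dyadicCube, Set.mem_ofPred_eq, dyadicIndex, funext_iff, Int.floor_eq_iff]

lemma mem_dyadicCube_dyadicIndex (v : ℤ) (x : En n) : x ∈ dyadicCube n v (dyadicIndex v x) :=
  mem_dyadicCube_iff.2 rfl

lemma dyadicIndex_preimage_singleton (v : ℤ) (m : Fin n → ℤ) :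
    dyadicIndex v ⁻¹' {m} = dyadicCube n v m :=
  Set.ext fun _ => mem_dyadicCube_iff.symm

lemma dyadicIndex_dyadicCorner (v : ℤ) (m : Fin n → ℤ) : dyadicIndex v (dyadicCorner v m) = m := by
  funext i
  simp only [dyadicIndex, dyadicCorner]
  rw [← mul_assoc, ← zpow_add₀ two_ne_zero, add_neg_cancel, zpow_zero, one_mul, Int.floor_intCast]

lemma measurable_dyadicIndex (v : ℤ) : Measurable (dyadicIndex v : En n → Fin n → ℤ) :=
  measurable_pi_iff.2 fun i => Int.measurable_floor.comp (by fun_prop)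

lemma measurableSet_dyadicCube (v : ℤ) (m : Fin n → ℤ) : MeasurableSet (dyadicCube n v m) := by
  rw [← dyadicIndex_preimage_singleton]
  exact measurable_dyadicIndex v (measurableSet_singleton m)

lemma tsum_mul_indicator_dyadicCube (v : ℤ) (f : (Fin n → ℤ) → ℝ≥0∞) (x : En n) :
    ∑' m, f m * (dyadicCube n v m).indicator (fun _ => (1 : ℝ≥0∞)) x = f (dyadicIndex v x) := by
  rw [tsum_eq_single (dyadicIndex v x) fun m hm => ?_,
    indicator_of_mem (mem_dyadicCube_dyadicIndex v x), mul_one]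
  rw [indicator_of_notMem fun h => hm (mem_dyadicCube_iff.1 h).symm, mul_zero]

lemma dyadicIndex_eq_of_le {u v : ℤ} (huv : u ≤ v) {x y : En n}
    (h : dyadicIndex v x = dyadicIndex v y) : dyadicIndex u x = dyadicIndex u y := by
  obtain ⟨k, rfl⟩ := Int.le.dest huv
  have coarsen (z : En n) (i : Fin n) :
      dyadicIndex u z i = dyadicIndex (u + k) z i / (2 ^ k : ℕ) := by
    simp only [dyadicIndex]
    rw [← Int.natCast_mul_floor_div_cancel (n := 2 ^ k) (by positivity), zpow_add₀ two_ne_zero]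
    push_cast
    rw [zpow_natCast, mul_left_comm, mul_assoc]
  funext i
  rw [coarsen, coarsen, h]

lemma dyadicCube_subset_of_le {u v : ℤ} (huv : u ≤ v) {l m : Fin n → ℤ} {x : En n}
    (hxl : x ∈ dyadicCube n u l) (hxm : x ∈ dyadicCube n v m) :
    dyadicCube n v m ⊆ dyadicCube n u l := fun y hy => by
  rw [mem_dyadicCube_iff] at *
  exact (dyadicIndex_eq_of_le huv (hy.trans hxm.symm)).trans hxl

lemma volume_dyadicCube (v : ℤ) (m : Fin n → ℤ) :
    volume (dyadicCube n v m) = ENNReal.ofReal ((2 : ℝ) ^ (-v)) ^ n := by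
  have h2 : (0 : ℝ) < (2 : ℝ) ^ v := by positivity
  have cube_eq_pi : dyadicCube n v m = (MeasurableEquiv.toLp 2 (Fin n → ℝ)).symm ⁻¹'
      Set.pi univ fun i => Ico ((m i : ℝ) / 2 ^ v) (((m i : ℝ) + 1) / 2 ^ v) := by
    ext x
    simp only [dyadicCube, Set.mem_ofPred_eq, mem_preimage, Set.mem_pi, mem_univ,
      forall_true_left, mem_Ico, div_le_iff₀ h2, lt_div_iff₀ h2, mul_comm (_ ^ v)]
    rfl
  have side (i : Fin n) : ((m i : ℝ) + 1) / 2 ^ v - (m i : ℝ) / 2 ^ v = (2 : ℝ) ^ (-v) := by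
    rw [← sub_div, add_sub_cancel_left, zpow_neg, one_div]
  rw [cube_eq_pi, (EuclideanSpace.volume_preserving_symm_measurableEquiv_toLp
    (Fin n)).measure_preimage (MeasurableSet.univ_pi fun i => measurableSet_Ico).nullMeasurableSet,
    Real.volume_pi_Ico]
  simp only [side, Finset.prod_const, Finset.card_univ, Fintype.card_fin]

lemma volume_dyadicCube_ne_zero (v : ℤ) (m : Fin n → ℤ) : volume (dyadicCube n v m) ≠ 0 := by
  rw [volume_dyadicCube]
  exact pow_ne_zero _ (ENNReal.ofReal_pos.2 (by positivity)).ne'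

lemma volume_dyadicCube_ne_top (v : ℤ) (m : Fin n → ℤ) : volume (dyadicCube n v m) ≠ ∞ := by
  rw [volume_dyadicCube]
  exact ENNReal.pow_ne_top ENNReal.ofReal_ne_top

lemma norm_sub_le_of_dyadicIndex_eq {v : ℤ} {x y : En n} (h : dyadicIndex v x = dyadicIndex v y) :
    ‖x - y‖ ≤ √n * (2 : ℝ) ^ (-v) := by
  have h2 : (0 : ℝ) < (2 : ℝ) ^ v := by positivity
  have coord (i : Fin n) : ‖(x - y) i‖ ≤ (2 : ℝ) ^ (-v) := by
    have h1 := Int.abs_sub_lt_one_of_floor_eq_floor (congrFun h i)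
    rw [← mul_sub, abs_mul, abs_of_pos h2, mul_comm] at h1
    rw [zpow_neg, Real.norm_eq_abs, PiLp.sub_apply, ← one_div, le_div_iff₀ h2]
    exact h1.le
  calc ‖x - y‖ = √(∑ i, ‖(x - y) i‖ ^ 2) := EuclideanSpace.norm_eq _
    _ ≤ √(∑ _i : Fin n, ((2 : ℝ) ^ (-v)) ^ 2) := by gcongr with i; exact coord i
    _ = √n * (2 : ℝ) ^ (-v) := by
      rw [Finset.sum_const, Finset.card_univ, Fintype.card_fin, nsmul_eq_mul,
        Real.sqrt_mul n.cast_nonneg, Real.sqrt_sq (by positivity)]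

lemma lintegral_comp_dyadicIndex_mono {μ ν : Measure (En n)} {v : ℤ}
    (h : ∀ m, μ (dyadicCube n v m) ≤ ν (dyadicCube n v m)) (c : (Fin n → ℤ) → ℝ≥0∞) :
    ∫⁻ x, c (dyadicIndex v x) ∂μ ≤ ∫⁻ x, c (dyadicIndex v x) ∂ν := by
  have hc : Measurable c := measurable_of_countable c
  rw [← lintegral_map hc (measurable_dyadicIndex v), ← lintegral_map hc (measurable_dyadicIndex v),
    lintegral_countable', lintegral_countable']
  refine ENNReal.tsum_le_tsum fun m => ?_
  rw [Measure.map_apply (measurable_dyadicIndex v) (measurableSet_singleton m),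
    Measure.map_apply (measurable_dyadicIndex v) (measurableSet_singleton m),
    dyadicIndex_preimage_singleton]
  exact mul_le_mul' le_rfl (h m)

/-! ### Distribution functions and dyadic maximal operators -/

lemma volume_ofReal_lt_inter_Ioi (a : ℝ≥0∞) :
    volume ({t : ℝ | ENNReal.ofReal t < a} ∩ Ioi 0) = a := by
  rcases eq_or_ne a ∞ with rfl | ha
  · simp only [ENNReal.ofReal_lt_top, Set.ofPred_true, univ_inter, Real.volume_Ioi]
  · have : {t : ℝ | ENNReal.ofReal t < a} ∩ Ioi 0 = Ioo 0 a.toReal := by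
      ext t
      refine and_comm.trans (and_congr_right fun ht => ?_)
      exact ENNReal.ofReal_lt_iff_lt_toReal (le_of_lt ht) ha
    rw [this, Real.volume_Ioo, sub_zero, ENNReal.ofReal_toReal ha]

/-- Unlike `lintegral_eq_lintegral_meas_lt`, this allows the value `∞`. -/
lemma lintegral_eq_lintegral_measure_ofReal_lt {X : Type*} [MeasurableSpace X] {μ : Measure X}
    [SFinite μ] {f : X → ℝ≥0∞} (hf : Measurable f) :
    ∫⁻ x, f x ∂μ = ∫⁻ t in Ioi (0 : ℝ), μ {x | ENNReal.ofReal t < f x} := by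
  let S : Set (X × ℝ) := {z | ENNReal.ofReal z.2 < f z.1}
  have hS : MeasurableSet S := measurableSet_lt (by fun_prop) (hf.comp measurable_fst)
  have section_meas (x : X) : MeasurableSet {t : ℝ | ENNReal.ofReal t < f x} :=
    measurableSet_lt (by fun_prop) measurable_const
  calc ∫⁻ x, f x ∂μ = ∫⁻ x, (∫⁻ t in Ioi (0 : ℝ), S.indicator 1 (x, t)) ∂μ := by
        refine lintegral_congr fun x => ?_
        rw [← volume_ofReal_lt_inter_Ioi (f x), ← Measure.restrict_apply (section_meas x)]
        exact (lintegral_indicator_one (section_meas x)).symm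
    _ = ∫⁻ t in Ioi (0 : ℝ), ∫⁻ x, S.indicator 1 (x, t) ∂μ :=
        lintegral_lintegral_swap (f := fun x t => S.indicator 1 (x, t))
          (measurable_one.indicator hS).aemeasurable
    _ = ∫⁻ t in Ioi (0 : ℝ), μ {x | ENNReal.ofReal t < f x} :=
        lintegral_congr fun t => lintegral_indicator_one (s := {x | ENNReal.ofReal t < f x})
          (measurableSet_lt measurable_const hf)

lemma lintegral_le_mul_of_measure_lt_le {X : Type*} [MeasurableSpace X] {μ : Measure X} [SFinite μ]
    {f g : X → ℝ≥0∞} (hf : Measurable f) (hg : Measurable g) {k : ℝ≥0∞} (hk : k ≠ ∞)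
    (h : ∀ t, μ {x | t < f x} ≤ k * μ {x | t < g x}) : ∫⁻ x, f x ∂μ ≤ k * ∫⁻ x, g x ∂μ := by
  rw [lintegral_eq_lintegral_measure_ofReal_lt hf, lintegral_eq_lintegral_measure_ofReal_lt hg,
    ← lintegral_const_mul' _ _ hk]
  exact lintegral_mono fun t => h _

lemma measurableSet_setOf_dyadicIndex (v : ℤ) (P : (Fin n → ℤ) → Prop) :
    MeasurableSet {x : En n | P (dyadicIndex v x)} :=
  measurable_dyadicIndex v (Set.to_countable {m | P m}).measurableSet

/-- If `D` is a union of cubes of level `v`, each of which lies in `A` by at least half, then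
replacing `D` by `D ∩ A` at most halves the integral of a function constant on these cubes. -/
lemma setLIntegral_comp_dyadicIndex_le_two_mul {v : ℤ} {D A : Set (En n)}
    (hD : ∀ x ∈ D, dyadicCube n v (dyadicIndex v x) ⊆ D)
    (hA : ∀ x ∈ D, volume (dyadicCube n v (dyadicIndex v x)) / 2 ≤
      volume (dyadicCube n v (dyadicIndex v x) ∩ A)) (c : (Fin n → ℤ) → ℝ≥0∞) :
    ∫⁻ x in D, c (dyadicIndex v x) ≤ 2 * ∫⁻ x in D ∩ A, c (dyadicIndex v x) := by
  have on_cubes (m : Fin n → ℤ) : volume.restrict D (dyadicCube n v m) ≤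
      ((2 : ℝ≥0∞) • volume.restrict (D ∩ A)) (dyadicCube n v m) := by
    rw [Measure.smul_apply, smul_eq_mul, Measure.restrict_apply (measurableSet_dyadicCube v m),
      Measure.restrict_apply (measurableSet_dyadicCube v m)]
    rcases (dyadicCube n v m ∩ D).eq_empty_or_nonempty with hempty | ⟨x, hxm, hxD⟩
    · rw [hempty, measure_empty]
      exact zero_le
    · obtain rfl := mem_dyadicCube_iff.1 hxm
      rw [inter_eq_left.2 (hD x hxD), ← inter_assoc, inter_eq_left.2 (hD x hxD), mul_comm]
      exact (ENNReal.div_le_iff_le_mul (.inl two_ne_zero) (.inl ofNat_ne_top)).1 (hA x hxD)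
  exact (lintegral_comp_dyadicIndex_mono on_cubes c).trans_eq (lintegral_smul_measure _ _)

/-- The dyadic weak type `(1,1)` inequality, for indicator functions at height `1/2`. -/
lemma volume_exists_half_lt_le {A : Set (En n)} (hA : MeasurableSet A) :
    volume {x : En n | ∃ v : ℕ, volume (dyadicCube n v (dyadicIndex v x)) / 2 <
      volume (dyadicCube n v (dyadicIndex v x) ∩ A)} ≤ 2 * volume A := by
  let heavy (v : ℕ) : Set (En n) := {x | volume (dyadicCube n v (dyadicIndex v x)) / 2 <
    volume (dyadicCube n v (dyadicIndex v x) ∩ A)}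
  have heavy_meas (v : ℕ) : MeasurableSet (heavy v) := measurableSet_setOf_dyadicIndex v
    fun m => volume (dyadicCube n v m) / 2 < volume (dyadicCube n v m ∩ A)
  have disjointed_meas := MeasurableSet.disjointed heavy_meas
  -- The points whose largest heavy cube has level `v` form a union of cubes of level `v`.
  have disjointed_iff {v : ℕ} {x y : En n} (hxy : dyadicIndex v x = dyadicIndex v y) :
      x ∈ disjointed heavy v ↔ y ∈ disjointed heavy v := by
    have heavy_iff {u : ℕ} (huv : u ≤ v) : x ∈ heavy u ↔ y ∈ heavy u := by
      simp only [heavy, Set.mem_ofPred_eq, dyadicIndex_eq_of_le (Int.ofNat_le.2 huv) hxy]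
    simp only [disjointed_eq_inter_compl, mem_inter_iff, mem_iInter, mem_compl_iff]
    exact and_congr (heavy_iff le_rfl) (forall₂_congr fun u hu => not_congr (heavy_iff hu.le))
  have level_bound (v : ℕ) :
      volume (disjointed heavy v) ≤ 2 * volume (disjointed heavy v ∩ A) := by
    simpa using setLIntegral_comp_dyadicIndex_le_two_mul (v := v)
      (fun x hx y hy => (disjointed_iff (mem_dyadicCube_iff.1 hy)).2 hx)
      (fun x hx => le_of_lt (disjointed_subset heavy v hx)) 1
  have disjoint_inter : Pairwise (Function.onFun Disjoint fun v => disjointed heavy v ∩ A) :=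
    fun u v huv => (disjoint_disjointed heavy huv).mono inter_subset_left inter_subset_left
  calc volume {x | ∃ v, x ∈ heavy v} = volume (⋃ v, disjointed heavy v) := by
        rw [iUnion_disjointed, Set.ofPred_exists]; rfl
    _ ≤ ∑' v, volume (disjointed heavy v) := measure_iUnion_le _
    _ ≤ ∑' v, 2 * volume (disjointed heavy v ∩ A) := ENNReal.tsum_le_tsum level_bound
    _ = 2 * volume (⋃ v, disjointed heavy v ∩ A) := by
        rw [ENNReal.tsum_mul_left, measure_iUnion disjoint_inter
          fun v => (disjointed_meas v).inter hA]
    _ ≤ 2 * volume A := by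
        gcongr
        exact iUnion_subset fun v => inter_subset_right

/-- A comparison principle for dyadic maximal functions: `f` may be any quantity that exceeds `t`
only where `g` exceeds `t` on more than half of some dyadic cube. -/
lemma lintegral_le_two_mul_of_lt_imp_half_lt {f g : En n → ℝ≥0∞} (hf : Measurable f)
    (hg : Measurable g)
    (h : ∀ x t, t < f x → ∃ v : ℕ, volume (dyadicCube n v (dyadicIndex v x)) / 2 <
      volume (dyadicCube n v (dyadicIndex v x) ∩ {y | t < g y})) :
    ∫⁻ x, f x ≤ 2 * ∫⁻ x, g x :=
  lintegral_le_mul_of_measure_lt_le hf hg ofNat_ne_top fun t =>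
    (measure_mono fun x hx => h x t hx).trans
      (volume_exists_half_lt_le (measurableSet_lt measurable_const hg))

/-! ### Medians -/

section UpperMedian

variable {X : Type*} [MeasurableSpace X] {μ : Measure X} {F : X → ℝ≥0∞}

/-- The upper median of `F` with respect to `μ`: the smallest level that `F` exceeds on at most half
of the total mass. Medians over a cube are taken with respect to `volume.restrict Q`. -/
def upperMedian (μ : Measure X) (F : X → ℝ≥0∞) : ℝ≥0∞ := sInf {t | μ {x | t < F x} ≤ μ univ / 2}

lemma half_lt_measure_of_lt_upperMedian {t : ℝ≥0∞} (ht : t < upperMedian μ F) :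
    μ univ / 2 < μ {x | t < F x} :=
  not_le.1 fun h => ht.not_ge (sInf_le h)

lemma measure_upperMedian_lt_le (μ : Measure X) (F : X → ℝ≥0∞) :
    μ {x | upperMedian μ F < F x} ≤ μ univ / 2 := by
  obtain ⟨u, u_anti, u_tendsto, u_mem⟩ :=
    exists_seq_tendsto_sInf (S := {t | μ {x | t < F x} ≤ μ univ / 2})
      ⟨∞, by simp⟩ (OrderBot.bddBelow _)
  have exceed : {x | upperMedian μ F < F x} = ⋃ k, {x | u k < F x} := by
    ext x
    simp only [Set.mem_ofPred_eq, mem_iUnion]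
    exact ⟨fun hx => (u_tendsto.eventually_lt_const hx).exists,
      fun ⟨k, hk⟩ => (sInf_le (u_mem k)).trans_lt hk⟩
  have mono : Monotone fun k => {x | u k < F x} := fun k l hkl x hx => (u_anti hkl).trans_lt hx
  rw [exceed, mono.measure_iUnion]
  exact iSup_le u_mem

lemma half_le_measure_le_upperMedian [IsFiniteMeasure μ] (hF : Measurable F) :
    μ univ / 2 ≤ μ {x | F x ≤ upperMedian μ F} := by
  have compl_eq : {x | F x ≤ upperMedian μ F} = {x | upperMedian μ F < F x}ᶜ := by
    ext x; simp
  rw [compl_eq, measure_compl (measurableSet_lt measurable_const hF) (measure_ne_top _ _)]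
  refine ENNReal.le_sub_of_add_le_right (measure_ne_top _ _) ?_
  calc μ univ / 2 + μ {x | upperMedian μ F < F x} ≤ μ univ / 2 + μ univ / 2 := by
        gcongr; exact measure_upperMedian_lt_le μ F
    _ = μ univ := ENNReal.add_halves _

lemma le_upperMedian [IsFiniteMeasure μ] [NeZero μ] {c : ℝ≥0∞} (hc : ∀ᵐ x ∂μ, c ≤ F x) :
    c ≤ upperMedian μ F := by
  refine le_sInf fun t ht => not_lt.1 fun htc => ?_
  have full : μ {x | t < F x} = μ univ :=
    measure_congr (Filter.eventuallyEq_univ.2 (hc.mono fun x hx => htc.trans_le hx))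
  have half_lt : μ univ / 2 < μ univ :=
    ENNReal.half_lt_self (Measure.measure_univ_ne_zero.2 (NeZero.ne μ)) (measure_ne_top μ univ)
  exact half_lt.not_ge (full ▸ ht)

end UpperMedian

/-! ### Log-Hölder continuity on dyadic cubes -/

lemma one_le_log_exp_one_add {t : ℝ} (ht : 0 ≤ t) : 1 ≤ Real.log (exp 1 + t) := by
  rw [le_log_iff_exp_le (by positivity)]
  exact le_add_of_nonneg_right ht

lemma log_le_one_add_log_mul_log {a s t : ℝ} (ha : 1 ≤ a) (hs : 0 < s) (ht : 0 ≤ t)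
    (h : s ≤ a * (exp 1 + t)) : Real.log s ≤ (1 + Real.log a) * Real.log (exp 1 + t) := by
  have hlog := log_le_log hs h
  rw [log_mul (by positivity) (by positivity)] at hlog
  linarith [le_mul_of_one_le_right (log_nonneg ha) (one_le_log_exp_one_add ht)]

namespace LocLogHolder

variable {c d : ℝ} {g h : En n → ℝ}

lemma const_mul (hg : LocLogHolder c g) {a : ℝ} (ha : 0 < a) :
    LocLogHolder (a * c) fun x => a * g x := by
  refine ⟨mul_pos ha hg.1, fun x y => ?_⟩
  rw [← mul_sub, abs_mul, abs_of_pos ha, mul_div_assoc]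
  exact mul_le_mul_of_nonneg_left (hg.2 x y) ha.le

lemma add (hg : LocLogHolder c g) (hh : LocLogHolder d h) :
    LocLogHolder (c + d) fun x => g x + h x := by
  refine ⟨add_pos hg.1 hh.1, fun x y => ?_⟩
  rw [add_sub_add_comm, add_div]
  exact (abs_add_le _ _).trans (add_le_add (hg.2 x y) (hh.2 x y))

lemma continuous (hg : LocLogHolder c g) : Continuous g := by
  replace hg := hg.2
  refine Metric.continuous_iff.2 fun y ε hε => ⟨exp (-(c / ε)), exp_pos _, fun x hx => ?_⟩
  rcases eq_or_ne x y with rfl | hxy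
  · simpa using hε
  have hpos : 0 < ‖x - y‖ := norm_pos_iff.2 (sub_ne_zero.2 hxy)
  have hL := one_le_log_exp_one_add (t := 1 / ‖x - y‖) (by positivity)
  rw [dist_eq_norm, exp_neg, ← one_div, lt_one_div hpos (exp_pos _)] at hx
  rw [Real.dist_eq]
  refine (hg x y).trans_lt ?_
  rw [div_lt_iff₀ (by positivity), ← div_lt_iff₀' hε, lt_log_iff_exp_lt (by positivity)]
  exact hx.trans (lt_add_of_pos_left _ (exp_pos 1))

lemma exists_level_mul_abs_sub_le (hg : LocLogHolder c g) :
    ∃ K : ℝ, ∀ (v : ℕ) (x y : En n), dyadicIndex v x = dyadicIndex v y →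
      v * |g x - g y| ≤ K := by
  obtain ⟨hc, hg⟩ := hg
  refine ⟨(1 + Real.log (√n + 1)) * c / Real.log 2, fun v x y hxy => ?_⟩
  have hlog : 0 ≤ Real.log (√n + 1) := log_nonneg (le_add_of_nonneg_left (sqrt_nonneg _))
  rw [le_div_iff₀ (log_pos one_lt_two)]
  rcases eq_or_ne x y with rfl | hne
  · simp only [sub_self, abs_zero, mul_zero, zero_mul]
    positivity
  have hpos : 0 < ‖x - y‖ := norm_pos_iff.2 (sub_ne_zero.2 hne)
  have hL := one_le_log_exp_one_add (t := 1 / ‖x - y‖) (by positivity)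
  have level_le : (2 : ℝ) ^ v ≤ (√n + 1) * (exp 1 + 1 / ‖x - y‖) := by
    have hdist := norm_sub_le_of_dyadicIndex_eq hxy
    rw [zpow_neg, zpow_natCast, ← div_eq_mul_inv, le_div_iff₀ (by positivity),
      ← le_div_iff₀' hpos] at hdist
    calc (2 : ℝ) ^ v ≤ √n * (1 / ‖x - y‖) := by rwa [mul_one_div]
      _ ≤ _ := by gcongr <;> simp [exp_nonneg]
  have level_log := log_le_one_add_log_mul_log (by simp) (by positivity) (by positivity) level_le
  rw [Real.log_pow] at level_log
  have hgxy := hg x y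
  rw [le_div_iff₀ (by positivity)] at hgxy
  calc v * |g x - g y| * Real.log 2 = v * Real.log 2 * |g x - g y| := by ring
    _ ≤ (1 + Real.log (√n + 1)) * Real.log (exp 1 + 1 / ‖x - y‖) * |g x - g y| := by gcongr
    _ = (1 + Real.log (√n + 1)) * (|g x - g y| * Real.log (exp 1 + 1 / ‖x - y‖)) := by ring
    _ ≤ (1 + Real.log (√n + 1)) * c := by gcongr

end LocLogHolder

namespace GlobLogHolder

variable {c : ℝ} {g : En n → ℝ}

lemma const_mul (hg : GlobLogHolder c g) {a : ℝ} (ha : 0 < a) :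
    GlobLogHolder (a * c) fun x => a * g x := by
  obtain ⟨hloc, gi, cd, hcd, hdecay⟩ := hg
  refine ⟨hloc.const_mul ha, a * gi, a * cd, mul_pos ha hcd, fun x => ?_⟩
  rw [← mul_sub, abs_mul, abs_of_pos ha, mul_div_assoc]
  exact mul_le_mul_of_nonneg_left (hdecay x) ha.le

lemma exists_log_mul_abs_sub_le (hg : GlobLogHolder c g) :
    ∃ K : ℝ, ∀ (v : ℕ) (x y : En n), dyadicIndex v x = dyadicIndex v y →
      Real.log (exp 1 + ‖y‖) * |g x - g y| ≤ K := by
  obtain ⟨-, gi, cd, -, hdecay⟩ := hg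
  have hlog : 0 ≤ Real.log (√n + 1) := log_nonneg (le_add_of_nonneg_left (sqrt_nonneg _))
  have decay (x : En n) : Real.log (exp 1 + ‖x‖) * |g x - gi| ≤ cd := by
    rw [← le_div_iff₀' (zero_lt_one.trans_le (one_le_log_exp_one_add (norm_nonneg x)))]
    exact hdecay x
  refine ⟨(1 + Real.log (√n + 1)) * cd + cd, fun v x y hxy => ?_⟩
  have hnorm : exp 1 + ‖y‖ ≤ (√n + 1) * (exp 1 + ‖x‖) := by
    have hdist := norm_sub_le_of_dyadicIndex_eq hxy.symm
    have hside : (2 : ℝ) ^ (-(v : ℤ)) ≤ 1 := zpow_le_one_of_nonpos₀ one_le_two (by simp)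
    have hle := mul_le_of_le_one_right (sqrt_nonneg (n : ℝ)) hside
    have := norm_sub_norm_le y x
    nlinarith [norm_nonneg x, one_le_exp zero_le_one, sqrt_nonneg (n : ℝ)]
  have hlog_le := log_le_one_add_log_mul_log (by simp) (by positivity) (norm_nonneg x) hnorm
  calc Real.log (exp 1 + ‖y‖) * |g x - g y|
      ≤ Real.log (exp 1 + ‖y‖) * (|g x - gi| + |g y - gi|) := by
        have := one_le_log_exp_one_add (norm_nonneg y)
        gcongr
        rw [abs_sub_comm (g y)]
        exact abs_sub_le _ _ _
    _ = Real.log (exp 1 + ‖y‖) * |g x - gi| + Real.log (exp 1 + ‖y‖) * |g y - gi| := mul_add _ _ _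
    _ ≤ (1 + Real.log (√n + 1)) * Real.log (exp 1 + ‖x‖) * |g x - gi| + cd := by
        gcongr; exact decay y
    _ ≤ (1 + Real.log (√n + 1)) * cd + cd := by
        rw [mul_assoc]; gcongr; exact decay x

end GlobLogHolder

/-! ### The maximal function of medians -/

lemma rpow_le_exp_mul_rpow {t a b K : ℝ} (ht : 0 < t) (h : |Real.log t| * |a - b| ≤ K) :
    t ^ a ≤ exp K * t ^ b := by
  rw [rpow_def_of_pos ht, rpow_def_of_pos ht, ← Real.exp_add, exp_le_exp]
  have := (le_abs_self _).trans ((abs_mul (Real.log t) (a - b)).trans_le h)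
  linarith

lemma abs_log_mul_le {t r a b : ℝ} (ht : 0 < t) (hr : 0 < r) (ha : 0 < a) (ha_le : a ≤ 1)
    (hb : 1 ≤ b) (hat : a ≤ t ^ r) (htb : t ^ r ≤ b) :
    |Real.log t| * r ≤ Real.log b - Real.log a := by
  have lower := Real.log_le_log ha hat
  have upper := Real.log_le_log (by positivity) htb
  rw [Real.log_rpow ht, mul_comm] at lower upper
  rw [← abs_of_pos hr, ← abs_mul, abs_le]
  constructor <;> linarith [Real.log_nonpos ha.le ha_le, Real.log_nonneg hb]

/-- The two log-Hölder conditions let one change the exponent `p x` into `p y` on a cube of level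
`v` as long as `t` lies between `(e + ‖y‖)^{-(n+1)/p⁻}` and a multiple of `2^{vn/p⁻}`; below the
first threshold the power is absorbed by the integrable second term. -/
lemma GlobLogHolder.exists_rpow_le {c : ℝ} {p : En n → ℝ} (hp : GlobLogHolder c p) {pmin : ℝ}
    (hpmin : 0 < pmin) (hle : ∀ x, pmin ≤ p x) :
    ∃ C : ℝ, 0 < C ∧ ∀ (v : ℕ) (x y : En n), dyadicIndex v x = dyadicIndex v y →
      ∀ t : ℝ, 0 ≤ t → t ^ pmin ≤ 2 * (2 ^ v) ^ n →
        t ^ p x ≤ C * (t ^ p y + (exp 1 + ‖y‖) ^ (-(n + 1 : ℝ))) := by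
  obtain ⟨K₁, hK₁⟩ := hp.1.exists_level_mul_abs_sub_le
  obtain ⟨K₂, hK₂⟩ := hp.exists_log_mul_abs_sub_le
  have hK₁_nonneg : 0 ≤ K₁ := by simpa using hK₁ 0 0 0 rfl
  have hK₂_nonneg : 0 ≤ K₂ := by simpa using hK₂ 0 0 0 rfl
  set K := (Real.log 2 * K₂ + n * Real.log 2 * K₁ + (n + 1) * K₂) / pmin with hK
  refine ⟨exp K, exp_pos K, fun v x y hxy t ht htv => ?_⟩
  have hL := one_le_log_exp_one_add (norm_nonneg y)
  set w := (exp 1 + ‖y‖) ^ (-(n + 1 : ℝ)) with hw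
  have hw_pos : 0 < w := by positivity
  have hw_le : w ≤ 1 := rpow_le_one_of_one_le_of_nonpos
    (by linarith [one_le_exp zero_le_one, norm_nonneg y]) (by linarith [n.cast_nonneg (α := ℝ)])
  rcases le_total w (t ^ pmin) with hwt | htw
  · have ht_pos : 0 < t := ht.lt_of_ne' fun h => by
      rw [h, zero_rpow hpmin.ne'] at hwt; exact hw_pos.not_ge hwt
    have abs_log_le : |Real.log t| * pmin ≤
        Real.log 2 + n * Real.log 2 * v + (n + 1) * Real.log (exp 1 + ‖y‖) := by
      refine (abs_log_mul_le ht_pos hpmin hw_pos hw_le ?_ hwt htv).trans_eq ?_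
      · exact one_le_mul_of_one_le_of_one_le one_le_two (one_le_pow₀ (one_le_pow₀ one_le_two))
      · rw [hw, Real.log_rpow (by positivity), Real.log_mul two_ne_zero (by positivity),
          Real.log_pow, Real.log_pow]
        ring
    have osc_le : |p x - p y| ≤ K₂ := by nlinarith [hK₂ v x y hxy, abs_nonneg (p x - p y)]
    refine (rpow_le_exp_mul_rpow ht_pos ?_).trans
      (mul_le_mul_of_nonneg_left (le_add_of_nonneg_right hw_pos.le) (exp_pos K).le)
    rw [hK, le_div_iff₀ hpmin]
    calc |Real.log t| * |p x - p y| * pmin = |Real.log t| * pmin * |p x - p y| := by ring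
      _ ≤ (Real.log 2 + n * Real.log 2 * v + (n + 1) * Real.log (exp 1 + ‖y‖)) * |p x - p y| := by
        gcongr
      _ = Real.log 2 * |p x - p y| + n * Real.log 2 * (v * |p x - p y|) +
          (n + 1) * (Real.log (exp 1 + ‖y‖) * |p x - p y|) := by ring
      _ ≤ _ := by gcongr; exacts [hK₁ v x y hxy, hK₂ v x y hxy]
  · have ht_le : t ≤ 1 := not_lt.1 fun h => (htw.trans hw_le).not_gt (one_lt_rpow h hpmin)
    calc t ^ p x ≤ t ^ pmin := rpow_le_rpow_of_exponent_ge' ht ht_le hpmin.le (hle x)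
      _ ≤ 1 * (0 + w) := by rw [one_mul, zero_add]; exact htw
      _ ≤ exp K * (t ^ p y + w) := by
        gcongr
        · exact one_le_exp (by positivity)
        · positivity

/-- The upper median of `F` over the dyadic cube `Q_{v,m}`. -/
def cubeMedian (F : En n → ℝ≥0∞) (v : ℤ) (m : Fin n → ℤ) : ℝ≥0∞ :=
  upperMedian (volume.restrict (dyadicCube n v m)) F

instance isFiniteMeasure_restrict_dyadicCube (v : ℤ) (m : Fin n → ℤ) :
    IsFiniteMeasure (volume.restrict (dyadicCube n v m)) :=
  isFiniteMeasure_restrict.2 (volume_dyadicCube_ne_top v m)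

lemma half_lt_volume_inter_of_lt_cubeMedian {F : En n → ℝ≥0∞} {v : ℤ}
    {m : Fin n → ℤ} {t : ℝ≥0∞} (ht : t < cubeMedian F v m) :
    volume (dyadicCube n v m) / 2 < volume (dyadicCube n v m ∩ {y | t < F y}) := by
  have h := half_lt_measure_of_lt_upperMedian ht
  rwa [Measure.restrict_apply_univ, Measure.restrict_apply' (measurableSet_dyadicCube v m),
    inter_comm] at h

lemma half_le_volume_inter_le_cubeMedian {F : En n → ℝ≥0∞} (hF : Measurable F) (v : ℤ)
    (m : Fin n → ℤ) :
    volume (dyadicCube n v m) / 2 ≤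
      volume (dyadicCube n v m ∩ {y | F y ≤ cubeMedian F v m}) := by
  have h := half_le_measure_le_upperMedian (μ := volume.restrict (dyadicCube n v m)) hF
  rwa [Measure.restrict_apply_univ, Measure.restrict_apply' (measurableSet_dyadicCube v m),
    inter_comm] at h

lemma le_cubeMedian {F : En n → ℝ≥0∞} {v : ℤ} {m : Fin n → ℤ} {c : ℝ≥0∞}
    (hc : ∀ x ∈ dyadicCube n v m, c ≤ F x) : c ≤ cubeMedian F v m := by
  have : NeZero (volume.restrict (dyadicCube n v m)) :=
    ⟨fun h => volume_dyadicCube_ne_zero v m (Measure.restrict_eq_zero.1 h)⟩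
  exact le_upperMedian (ae_restrict_of_forall_mem (measurableSet_dyadicCube v m) hc)

lemma measurable_cubeMedian_dyadicIndex (F : En n → ℝ≥0∞) (v : ℤ) :
    Measurable fun x => cubeMedian F v (dyadicIndex v x) :=
  (measurable_of_countable (cubeMedian F v)).comp (measurable_dyadicIndex v)

lemma ofReal_two_mul_mul_half_volume_dyadicCube (v : ℕ) (m : Fin n → ℤ) :
    ENNReal.ofReal (2 * (2 ^ v) ^ n) * (volume (dyadicCube n v m) / 2) = 1 := by
  rw [volume_dyadicCube, ← ENNReal.ofReal_pow (by positivity), ← ENNReal.ofReal_ofNat,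
    ← ENNReal.ofReal_div_of_pos two_pos, ← ENNReal.ofReal_mul (by positivity), zpow_neg,
    zpow_natCast, inv_pow, ← ENNReal.ofReal_one]
  congr 1
  field_simp

section VariableExponent

variable {p : En n → ℝ} {pmin : ℝ} {F : En n → ℝ≥0∞}

/-- Chebyshev's inequality on `Q_{v,m}`, whose volume is `2^{-vn}`. -/
lemma cubeMedian_rpow_le (hpmin : 0 < pmin) (hle : ∀ x, pmin ≤ p x) (hF : ∫⁻ x, F x ^ p x ≤ 1)
    (hFm : Measurable fun x => F x ^ p x) (v : ℕ) (m : Fin n → ℤ) :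
    cubeMedian F v m ^ pmin ≤ ENNReal.ofReal (2 * (2 ^ v) ^ n) := by
  have one_le : 1 ≤ ENNReal.ofReal (2 * (2 ^ v) ^ n) := by
    rw [ENNReal.one_le_ofReal]
    exact one_le_mul_of_one_le_of_one_le one_le_two (one_le_pow₀ (one_le_pow₀ one_le_two))
  refine le_of_forall_lt_imp_le_of_dense fun s hs => ?_
  rcases le_total s 1 with hs1 | hs1
  · exact hs1.trans one_le
  set t := s ^ pmin⁻¹
  have ht_lt : t < cubeMedian F v m := (ENNReal.rpow_inv_lt_iff hpmin).2 hs
  have ht1 : 1 ≤ t := ENNReal.one_le_rpow hs1 (inv_pos.2 hpmin)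
  have level_subset : dyadicCube n v m ∩ {y | t < F y} ⊆ {y | s ≤ F y ^ p y} := fun y hy =>
    calc s = t ^ pmin := (ENNReal.rpow_inv_rpow hpmin.ne' s).symm
      _ ≤ t ^ p y := ENNReal.rpow_le_rpow_of_exponent_le ht1 (hle y)
      _ ≤ F y ^ p y := ENNReal.rpow_le_rpow hy.2.le (hpmin.le.trans (hle y))
  have chebyshev : s * (volume (dyadicCube n v m) / 2) ≤ 1 :=
    calc s * (volume (dyadicCube n v m) / 2) ≤ s * volume {y | s ≤ F y ^ p y} := by
          gcongr
          exact (half_lt_volume_inter_of_lt_cubeMedian ht_lt).le.trans (measure_mono level_subset)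
      _ ≤ 1 := (mul_meas_ge_le_lintegral hFm s).trans hF
  calc s = s * (volume (dyadicCube n v m) / 2) * ENNReal.ofReal (2 * (2 ^ v) ^ n) := by
        rw [mul_assoc, mul_comm (_ / _), ofReal_two_mul_mul_half_volume_dyadicCube, mul_one]
    _ ≤ ENNReal.ofReal (2 * (2 ^ v) ^ n) := mul_le_of_le_one_left' chebyshev

lemma cubeMedian_ne_top (hpmin : 0 < pmin) (hle : ∀ x, pmin ≤ p x) (hF : ∫⁻ x, F x ^ p x ≤ 1)
    (hFm : Measurable fun x => F x ^ p x) (v : ℕ) (m : Fin n → ℤ) : cubeMedian F v m ≠ ∞ := by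
  intro h
  have := cubeMedian_rpow_le hpmin hle hF hFm v m
  rw [h, ENNReal.top_rpow_of_pos hpmin] at this
  exact ENNReal.ofReal_ne_top (top_le_iff.1 this)

lemma lintegral_ofReal_rpow_norm_ne_top :
    ∫⁻ x : En n, ENNReal.ofReal ((exp 1 + ‖x‖) ^ (-(n + 1 : ℝ))) ≠ ∞ := by
  refine ne_top_of_le_ne_top
    (finite_integral_one_add_norm (μ := volume) (E := En n) (r := n + 1) (by simp)).ne
    (lintegral_mono fun x => ENNReal.ofReal_le_ofReal ?_)
  exact rpow_le_rpow_of_nonpos (by positivity)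
    (by gcongr; exact one_le_exp zero_le_one) (by linarith [n.cast_nonneg (α := ℝ)])

lemma GlobLogHolder.exists_ennreal_rpow_le {c : ℝ} (hp : GlobLogHolder c p)
    (hpmin : 0 < pmin) (hle : ∀ x, pmin ≤ p x) :
    ∃ C : ℝ≥0∞, C ≠ 0 ∧ C ≠ ∞ ∧ ∀ (v : ℕ) (x y : En n), dyadicIndex v x = dyadicIndex v y →
      ∀ t : ℝ≥0∞, t ^ pmin ≤ ENNReal.ofReal (2 * (2 ^ v) ^ n) →
        t ^ p x ≤ C * (t ^ p y + ENNReal.ofReal ((exp 1 + ‖y‖) ^ (-(n + 1 : ℝ)))) := by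
  obtain ⟨C, hC, h⟩ := hp.exists_rpow_le hpmin hle
  refine ⟨ENNReal.ofReal C, (ENNReal.ofReal_pos.2 hC).ne', ENNReal.ofReal_ne_top,
    fun v x y hxy t ht => ?_⟩
  have hp_pos (x : En n) : 0 ≤ p x := hpmin.le.trans (hle x)
  have t_ne_top : t ≠ ∞ := by
    rintro rfl
    rw [ENNReal.top_rpow_of_pos hpmin] at ht
    exact ENNReal.ofReal_ne_top (top_le_iff.1 ht)
  obtain ⟨r, hr, rfl⟩ : ∃ r : ℝ, 0 ≤ r ∧ ENNReal.ofReal r = t :=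
    ⟨t.toReal, ENNReal.toReal_nonneg, ENNReal.ofReal_toReal t_ne_top⟩
  rw [ENNReal.ofReal_rpow_of_nonneg hr hpmin.le, ENNReal.ofReal_le_ofReal_iff (by positivity)] at ht
  rw [ENNReal.ofReal_rpow_of_nonneg hr (hp_pos x), ENNReal.ofReal_rpow_of_nonneg hr (hp_pos y),
    ← ENNReal.ofReal_add (by positivity) (by positivity), ← ENNReal.ofReal_mul hC.le]
  exact ENNReal.ofReal_le_ofReal (h v x y hxy r hr ht)

theorem GlobLogHolder.exists_lintegral_iSup_cubeMedian_le {c : ℝ} (hp : GlobLogHolder c p)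
    (hpmin : 0 < pmin) (hle : ∀ x, pmin ≤ p x) :
    ∃ B : ℝ≥0∞, B ≠ ∞ ∧ ∀ F : En n → ℝ≥0∞, Measurable F → ∫⁻ x, F x ^ p x ≤ 1 →
      ∫⁻ x, (⨆ v : ℕ, cubeMedian F v (dyadicIndex v x)) ^ p x ≤ B := by
  obtain ⟨C, hC0, hC, hpow⟩ := hp.exists_ennreal_rpow_le hpmin hle
  let w : En n → ℝ≥0∞ := fun y => ENNReal.ofReal ((exp 1 + ‖y‖) ^ (-(n + 1 : ℝ)))
  have hw : Measurable w := by fun_prop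
  have hp_meas : Measurable p := hp.1.continuous.measurable
  refine ⟨2 * (C * (1 + ∫⁻ y, w y)), by finiteness [lintegral_ofReal_rpow_norm_ne_top (n := n)],
    fun F hF hF1 => ?_⟩
  have exceed (x : En n) (τ : ℝ≥0∞)
      (hτ : τ < (⨆ v : ℕ, cubeMedian F v (dyadicIndex v x)) ^ p x) :
      ∃ v : ℕ, volume (dyadicCube n v (dyadicIndex v x)) / 2 <
        volume (dyadicCube n v (dyadicIndex v x) ∩ {y | τ < C * (F y ^ p y + w y)}) := by
    have hp_pos (y : En n) : 0 < p y := hpmin.trans_le (hle y)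
    obtain ⟨v, hv⟩ := lt_iSup_iff.1 ((ENNReal.rpow_inv_lt_iff (hp_pos x)).2 hτ)
    set t := τ ^ (p x)⁻¹
    refine ⟨v, (half_lt_volume_inter_of_lt_cubeMedian hv).trans_le (measure_mono ?_)⟩
    rintro y ⟨hyQ, hty : t < F y⟩
    refine ⟨hyQ, ?_⟩
    have t_rpow_le := (ENNReal.rpow_le_rpow hv.le hpmin.le).trans
      (cubeMedian_rpow_le hpmin hle hF1 (hF.pow hp_meas) v _)
    calc τ = t ^ p x := (ENNReal.rpow_inv_rpow (hp_pos x).ne' τ).symm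
      _ ≤ C * (t ^ p y + w y) := hpow v x y (mem_dyadicCube_iff.1 hyQ).symm t t_rpow_le
      _ < C * (F y ^ p y + w y) := by
        refine (ENNReal.mul_lt_mul_iff_right hC0 hC).2 ?_
        exact ENNReal.add_lt_add_right ENNReal.ofReal_ne_top
          (ENNReal.rpow_lt_rpow hty (hp_pos y))
  calc _ ≤ 2 * ∫⁻ y, C * (F y ^ p y + w y) :=
        lintegral_le_two_mul_of_lt_imp_half_lt
          ((Measurable.iSup fun v : ℕ => measurable_cubeMedian_dyadicIndex F v).pow hp_meas)
          (((hF.pow hp_meas).add hw).const_mul C) exceed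
    _ = 2 * (C * ((∫⁻ y, F y ^ p y) + ∫⁻ y, w y)) := by
        rw [lintegral_const_mul' _ _ hC, lintegral_add_right _ hw]
    _ ≤ 2 * (C * (1 + ∫⁻ y, w y)) := by gcongr

end VariableExponent

/-! ### Luxemburg norms and weights -/

section Luxemburg

variable {p : En n → ℝ} {F G : En n → ℝ≥0∞}

lemma lintegral_div_rpow_le_one_of_luxNorm_lt (hp : ∀ x, 0 ≤ p x) {c : ℝ≥0∞}
    (h : luxNorm p F < c) : ∫⁻ x, (F x / c) ^ p x ≤ 1 := by
  obtain ⟨d, ⟨-, hd⟩, hdc⟩ := sInf_lt_iff.1 h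
  refine (lintegral_mono fun x => ?_).trans hd
  exact ENNReal.rpow_le_rpow (ENNReal.div_le_div_left hdc.le _) (hp x)

lemma luxNorm_le_mul_luxNorm (hp : ∀ x, 0 ≤ p x) {A : ℝ≥0∞} (hA0 : A ≠ 0) (hA : A ≠ ∞)
    (h : ∀ x, F x ≤ A * G x) : luxNorm p F ≤ A * luxNorm p G := by
  rw [mul_comm, ← ENNReal.div_le_iff_le_mul (.inl hA0) (.inl hA)]
  refine le_sInf fun c ⟨hc, hGc⟩ => ?_
  rw [ENNReal.div_le_iff_le_mul (.inl hA0) (.inl hA), mul_comm]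
  refine sInf_le ⟨ENNReal.mul_pos hA0 hc.ne', (lintegral_mono fun x => ?_).trans hGc⟩
  refine ENNReal.rpow_le_rpow ?_ (hp x)
  rw [← ENNReal.mul_div_mul_left (G x) c hA0 hA]
  exact ENNReal.div_le_div_right (h x) _

lemma luxNorm_le_rpow {pmin : ℝ} (hpmin : 0 < pmin) (hle : ∀ x, pmin ≤ p x) {K : ℝ≥0∞}
    (hK1 : 1 ≤ K) (hK : K ≠ ∞) (h : ∫⁻ x, F x ^ p x ≤ K) : luxNorm p F ≤ K ^ pmin⁻¹ := by
  have hK_pos : 0 < K := zero_lt_one.trans_le hK1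
  have hroot : 1 ≤ K ^ pmin⁻¹ := ENNReal.one_le_rpow hK1 (inv_pos.2 hpmin)
  refine sInf_le ⟨zero_lt_one.trans_le hroot, ?_⟩
  calc ∫⁻ x, (F x / K ^ pmin⁻¹) ^ p x ≤ ∫⁻ x, F x ^ p x * K⁻¹ := by
        refine lintegral_mono fun x => ?_
        rw [ENNReal.div_rpow_of_nonneg _ _ (hpmin.le.trans (hle x)), div_eq_mul_inv]
        gcongr
        calc K = (K ^ pmin⁻¹) ^ pmin := (ENNReal.rpow_inv_rpow hpmin.ne' K).symm
          _ ≤ (K ^ pmin⁻¹) ^ p x := ENNReal.rpow_le_rpow_of_exponent_le hroot (hle x)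
    _ = (∫⁻ x, F x ^ p x) * K⁻¹ := lintegral_mul_const' _ _ (ENNReal.inv_ne_top.2 hK_pos.ne')
    _ ≤ K * K⁻¹ := by gcongr
    _ = 1 := ENNReal.mul_inv_cancel hK_pos.ne' hK

end Luxemburg

/-- The weight `2^{v(α(x)+n/2)}` of level `v`. -/
def levelWeight (α : En n → ℝ) (v : ℕ) (x : En n) : ℝ≥0∞ := 2 ^ ((v : ℝ) * (α x + n / 2))

/-- The coefficients of `λ` multiplied by the weights at the corners of their cubes. They carry all
the information on `α` that the sequence space norms see, up to constants. -/
def cornerCoeff (α : En n → ℝ) (lam : ℕ → (Fin n → ℤ) → ℂ) (v : ℕ) (m : Fin n → ℤ) : ℝ≥0∞ :=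
  levelWeight α v (dyadicCorner v m) * ‖lam v m‖ₑ

/-- The function `(∑_v ∑_m a_{v,m}^q χ_{v,m})^{1/q}`. -/
def squareFun (q : ℝ) (a : ℕ → (Fin n → ℤ) → ℝ≥0∞) (x : En n) : ℝ≥0∞ :=
  (∑' v : ℕ, a v (dyadicIndex v x) ^ q) ^ (1 / q)

/-- The Carleson packing condition on the `q`-th powers of `a`, with constant `K`: the unweighted
form of the condition that defines the norm of `f^{α(·)}_{∞,q}`. -/
def CarlesonBound (q : ℝ) (K : ℝ≥0∞) (a : ℕ → (Fin n → ℤ) → ℝ≥0∞) : Prop :=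
  ∀ (vQ : ℤ) (mQ : Fin n → ℤ), (∑' v : ℕ, if vQ ≤ (v : ℤ) then
    ∫⁻ x in dyadicCube n vQ mQ, a v (dyadicIndex v x) ^ q else 0) ≤ K * volume (dyadicCube n vQ mQ)

section Weights

variable {α : En n → ℝ}

lemma levelWeight_ne_zero (α : En n → ℝ) (v : ℕ) (x : En n) : levelWeight α v x ≠ 0 :=
  (ENNReal.rpow_pos two_pos ofNat_ne_top).ne'

lemma levelWeight_ne_top (α : En n → ℝ) (v : ℕ) (x : En n) : levelWeight α v x ≠ ∞ :=
  ENNReal.rpow_ne_top_of_ne_zero two_ne_zero ofNat_ne_top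

lemma ofReal_two_rpow (s : ℝ) : ENNReal.ofReal (2 ^ s) = 2 ^ s := by
  rw [← ENNReal.ofReal_rpow_of_pos two_pos, ENNReal.ofReal_ofNat]

lemma levelWeight_eq_mul {α₀ α₁ : En n → ℝ} {θ : ℝ} {x : En n}
    (hα : α x = (1 - θ) * α₀ x + θ * α₁ x) (v : ℕ) :
    levelWeight α v x = levelWeight α₀ v x ^ (1 - θ) * levelWeight α₁ v x ^ θ := by
  rw [levelWeight, levelWeight, levelWeight, ← ENNReal.rpow_mul, ← ENNReal.rpow_mul,
    ← ENNReal.rpow_add _ _ two_ne_zero ofNat_ne_top, hα]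
  congr 1
  ring

lemma LocLogHolder.exists_levelWeight_le {c : ℝ} (hα : LocLogHolder c α) :
    ∃ A : ℝ≥0∞, A ≠ 0 ∧ A ≠ ∞ ∧ ∀ (v : ℕ) (x y : En n), dyadicIndex v x = dyadicIndex v y →
      levelWeight α v x ≤ A * levelWeight α v y := by
  obtain ⟨K, hK⟩ := hα.exists_level_mul_abs_sub_le
  refine ⟨2 ^ K, (ENNReal.rpow_pos two_pos ofNat_ne_top).ne',
    ENNReal.rpow_ne_top_of_ne_zero two_ne_zero ofNat_ne_top, fun v x y hxy => ?_⟩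
  rw [levelWeight, levelWeight, ← ENNReal.rpow_add _ _ two_ne_zero ofNat_ne_top]
  refine ENNReal.rpow_le_rpow_of_exponent_le one_le_two ?_
  have := mul_le_mul_of_nonneg_left (le_abs_self (α x - α y)) (v.cast_nonneg (α := ℝ))
  linarith [hK v x y hxy]

lemma seqNorm_eq_luxNorm (α p : En n → ℝ) (q : ℝ) (lam : ℕ → (Fin n → ℤ) → ℂ) :
    seqNorm α p (fun _ => q) lam = luxNorm p fun x =>
      (∑' v : ℕ, (levelWeight α v x * ‖lam v (dyadicIndex v x)‖ₑ) ^ q) ^ (1 / q) := by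
  simp only [seqNorm, mixedNorm, tsum_mul_indicator_dyadicCube,
    ENNReal.ofReal_mul (rpow_nonneg two_pos.le _), ofReal_two_rpow, ofReal_norm, levelWeight]

lemma seqNormInf_eq_iSup {q : ℝ} (hq : 0 ≤ q) (α : En n → ℝ) (lam : ℕ → (Fin n → ℤ) → ℂ) :
    seqNormInf α q lam = ⨆ (vQ : ℤ) (mQ : Fin n → ℤ),
      volume (dyadicCube n vQ mQ) ^ (-(1 / q)) * (∑' v : ℕ, if vQ ≤ (v : ℤ) then
        ∫⁻ x in dyadicCube n vQ mQ, (levelWeight α v x * ‖lam v (dyadicIndex v x)‖ₑ) ^ q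
        else 0) ^ (1 / q) := by
  simp only [seqNormInf, tsum_mul_indicator_dyadicCube, levelWeight,
    ENNReal.ofReal_mul (rpow_nonneg two_pos.le _), ofReal_two_rpow, ENNReal.rpow_mul,
    ENNReal.mul_rpow_of_nonneg _ _ hq, ← ENNReal.ofReal_rpow_of_nonneg (norm_nonneg _) hq,
    ofReal_norm]

lemma rpow_tsum_rpow_le_mul {q : ℝ} (hq : 0 < q) {A : ℝ≥0∞} {f g : ℕ → ℝ≥0∞}
    (h : ∀ v, f v ≤ A * g v) :
    (∑' v, f v ^ q) ^ (1 / q) ≤ A * (∑' v, g v ^ q) ^ (1 / q) := by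
  have hq' : 0 ≤ 1 / q := by positivity
  calc (∑' v, f v ^ q) ^ (1 / q) ≤ (∑' v, A ^ q * g v ^ q) ^ (1 / q) := by
        gcongr with v
        exact (ENNReal.rpow_le_rpow (h v) hq.le).trans_eq (ENNReal.mul_rpow_of_nonneg _ _ hq.le)
    _ = A * (∑' v, g v ^ q) ^ (1 / q) := by
        rw [ENNReal.tsum_mul_left, ENNReal.mul_rpow_of_nonneg _ _ hq', one_div,
          ENNReal.rpow_rpow_inv hq.ne']

variable {p : En n → ℝ} {q c : ℝ}

lemma LocLogHolder.exists_luxNorm_squareFun_cornerCoeff_le (hα : LocLogHolder c α)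
    (hp : ∀ x, 0 ≤ p x) (hq : 0 < q) :
    ∃ A : ℝ≥0∞, A ≠ 0 ∧ A ≠ ∞ ∧ ∀ lam : ℕ → (Fin n → ℤ) → ℂ,
      luxNorm p (squareFun q (cornerCoeff α lam)) ≤ A * seqNorm α p (fun _ => q) lam := by
  obtain ⟨A, hA0, hA, weight_le⟩ := hα.exists_levelWeight_le
  refine ⟨A, hA0, hA, fun lam => ?_⟩
  rw [seqNorm_eq_luxNorm]
  refine luxNorm_le_mul_luxNorm hp hA0 hA fun x => rpow_tsum_rpow_le_mul hq fun v => ?_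
  rw [← mul_assoc]
  exact mul_le_mul_left (weight_le v _ x (dyadicIndex_dyadicCorner _ _)) _

lemma LocLogHolder.exists_seqNorm_le_mul_luxNorm_squareFun (hα : LocLogHolder c α)
    (hp : ∀ x, 0 ≤ p x) (hq : 0 < q) :
    ∃ A : ℝ≥0∞, A ≠ ∞ ∧ ∀ lam : ℕ → (Fin n → ℤ) → ℂ,
      seqNorm α p (fun _ => q) lam ≤ A * luxNorm p (squareFun q (cornerCoeff α lam)) := by
  obtain ⟨A, hA0, hA, weight_le⟩ := hα.exists_levelWeight_le
  refine ⟨A, hA, fun lam => ?_⟩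
  rw [seqNorm_eq_luxNorm]
  refine luxNorm_le_mul_luxNorm hp hA0 hA fun x => rpow_tsum_rpow_le_mul hq fun v => ?_
  rw [cornerCoeff, ← mul_assoc]
  exact mul_le_mul_left (weight_le v x _ (dyadicIndex_dyadicCorner _ _).symm) _

lemma LocLogHolder.exists_seqNormInf_le_of_carlesonBound (hα : LocLogHolder c α) (hq : 0 < q) :
    ∃ A : ℝ≥0∞, A ≠ ∞ ∧ ∀ (K : ℝ≥0∞) (lam : ℕ → (Fin n → ℤ) → ℂ),
      CarlesonBound q K (cornerCoeff α lam) → seqNormInf α q lam ≤ A * K ^ (1 / q) := by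
  obtain ⟨A, -, hA, weight_le⟩ := hα.exists_levelWeight_le
  refine ⟨A, hA, fun K lam h => ?_⟩
  have hq' : 0 ≤ 1 / q := by positivity
  rw [seqNormInf_eq_iSup hq.le]
  refine iSup₂_le fun vQ mQ => ?_
  set Q := dyadicCube n vQ mQ
  have freeze (v : ℕ) : ∫⁻ x in Q, (levelWeight α v x * ‖lam v (dyadicIndex v x)‖ₑ) ^ q ≤
      A ^ q * ∫⁻ x in Q, cornerCoeff α lam v (dyadicIndex v x) ^ q := by
    rw [← lintegral_const_mul' _ _ (ENNReal.rpow_ne_top_of_nonneg hq.le hA)]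
    refine lintegral_mono fun x => ?_
    rw [← ENNReal.mul_rpow_of_nonneg _ _ hq.le, cornerCoeff, ← mul_assoc]
    gcongr
    exact weight_le v x _ (dyadicIndex_dyadicCorner _ _).symm
  calc volume Q ^ (-(1 / q)) * (∑' v : ℕ, if vQ ≤ (v : ℤ) then
          ∫⁻ x in Q, (levelWeight α v x * ‖lam v (dyadicIndex v x)‖ₑ) ^ q else 0) ^ (1 / q)
      ≤ volume Q ^ (-(1 / q)) * (A ^ q * (K * volume Q)) ^ (1 / q) := by
        gcongr
        refine (ENNReal.tsum_le_tsum fun v => ?_).trans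
          (ENNReal.tsum_mul_left.trans_le (mul_le_mul_right (h vQ mQ) _))
        split_ifs
        · exact freeze v
        · exact zero_le
    _ = volume Q ^ (-(1 / q)) * volume Q ^ (1 / q) * (A * K ^ (1 / q)) := by
        rw [ENNReal.mul_rpow_of_nonneg _ _ hq', ENNReal.mul_rpow_of_nonneg _ _ hq', one_div,
          ENNReal.rpow_rpow_inv hq.ne']
        ring
    _ = A * K ^ (1 / q) := by
        rw [← ENNReal.rpow_add _ _ (volume_dyadicCube_ne_zero _ _) (volume_dyadicCube_ne_top _ _),
          neg_add_cancel, ENNReal.rpow_zero, one_mul]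

end Weights

lemma carlesonBound_of_half_le {q : ℝ} {D : ℝ≥0∞} {a : ℕ → (Fin n → ℤ) → ℝ≥0∞}
    {E : ℕ → Set (En n)} (hE : ∀ v, MeasurableSet (E v))
    (hhalf : ∀ (v : ℕ) (m : Fin n → ℤ),
      volume (dyadicCube n v m) / 2 ≤ volume (dyadicCube n v m ∩ E v))
    (hsum : ∀ x, ∑' v, (E v).indicator (fun x => a v (dyadicIndex v x) ^ q) x ≤ D) :
    CarlesonBound q (2 * D) a := by
  intro vQ mQ
  set Q := dyadicCube n vQ mQ
  have a_meas (v : ℕ) : Measurable fun x : En n => a v (dyadicIndex v x) ^ q :=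
    (measurable_of_countable fun m => a v m ^ q).comp (measurable_dyadicIndex v)
  have restrict_half (v : ℕ) (hv : vQ ≤ v) : ∫⁻ x in Q, a v (dyadicIndex v x) ^ q ≤
      2 * ∫⁻ x in Q, (E v).indicator (fun x => a v (dyadicIndex v x) ^ q) x := by
    rw [setLIntegral_indicator (hE v), inter_comm]
    exact setLIntegral_comp_dyadicIndex_le_two_mul
      (fun x hx => dyadicCube_subset_of_le hv hx (mem_dyadicCube_dyadicIndex v x))
      (fun x _ => hhalf v _) fun m => a v m ^ q
  calc (∑' v : ℕ, if vQ ≤ (v : ℤ) then ∫⁻ x in Q, a v (dyadicIndex v x) ^ q else 0)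
      ≤ ∑' v : ℕ, 2 * ∫⁻ x in Q, (E v).indicator (fun x => a v (dyadicIndex v x) ^ q) x := by
        refine ENNReal.tsum_le_tsum fun v => ?_
        split_ifs with hv
        · exact restrict_half v hv
        · exact zero_le
    _ = 2 * ∫⁻ x in Q, ∑' v, (E v).indicator (fun x => a v (dyadicIndex v x) ^ q) x := by
        rw [ENNReal.tsum_mul_left,
          lintegral_tsum fun v => ((a_meas v).indicator (hE v)).aemeasurable]
    _ ≤ 2 * ∫⁻ _ in Q, D := by gcongr with x; exact hsum x
    _ = 2 * D * volume Q := by rw [setLIntegral_const, mul_assoc]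

/-! ### The factorization -/

lemma rpow_mul_rpow_le_add {a b : ℝ≥0∞} {s t : ℝ} (hs : 0 ≤ s) (ht : 0 ≤ t) (h : s + t = 1) :
    a ^ s * b ^ t ≤ a + b := by
  calc a ^ s * b ^ t ≤ (a + b) ^ s * (a + b) ^ t := by
        gcongr
        · exact le_self_add
        · exact le_add_self
    _ = a + b := by rw [← ENNReal.rpow_add_of_nonneg _ _ hs ht, h, ENNReal.rpow_one]

lemma rpow_mul_rpow_mul_div_rpow_eq_self {a M : ℝ≥0∞} {θ r u : ℝ} (hθ : θ ∈ Ioo (0 : ℝ) 1)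
    (hr : 0 ≤ r) (hu : 0 < u) (h : (1 - θ) * r + θ * u = 1) (haM : a ≤ M) (hM : M ≠ ∞) :
    (a ^ r * M ^ (θ * u / (1 - θ))) ^ (1 - θ) * ((a / M) ^ u) ^ θ = a := by
  obtain ⟨hθ0, hθ1⟩ : 0 < θ ∧ 0 < 1 - θ := ⟨hθ.1, sub_pos.2 hθ.2⟩
  have mul_div_self : M * (a / M) = a :=
    ENNReal.mul_div_cancel' (fun h0 => by rwa [h0, nonpos_iff_eq_zero] at haM)
      fun htop => absurd htop hM
  have hθu : 0 ≤ θ * u := by positivity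
  calc (a ^ r * M ^ (θ * u / (1 - θ))) ^ (1 - θ) * ((a / M) ^ u) ^ θ
      = a ^ ((1 - θ) * r) * (M ^ (θ * u) * (a / M) ^ (θ * u)) := by
        rw [ENNReal.mul_rpow_of_nonneg _ _ hθ1.le, ← ENNReal.rpow_mul, ← ENNReal.rpow_mul,
          ← ENNReal.rpow_mul, div_mul_cancel₀ _ hθ1.ne', mul_comm r, mul_comm u, mul_assoc]
    _ = a ^ ((1 - θ) * r) * a ^ (θ * u) := by
        rw [← ENNReal.mul_rpow_of_nonneg _ _ hθu, mul_div_self]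
    _ = a := by rw [← ENNReal.rpow_add_of_nonneg _ _ (by positivity) hθu, h, ENNReal.rpow_one]

section SquareFun

variable {q : ℝ} {a b : ℕ → (Fin n → ℤ) → ℝ≥0∞}

lemma measurable_squareFun (q : ℝ) (a : ℕ → (Fin n → ℤ) → ℝ≥0∞) : Measurable (squareFun q a) :=
  (Measurable.tsum fun v : ℕ =>
    (measurable_of_countable fun m => a v m ^ q).comp (measurable_dyadicIndex v)).pow_const _

lemma squareFun_rpow (hq : 0 < q) (a : ℕ → (Fin n → ℤ) → ℝ≥0∞) (x : En n) :
    squareFun q a x ^ q = ∑' v : ℕ, a v (dyadicIndex v x) ^ q := by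
  rw [squareFun, one_div, ENNReal.rpow_inv_rpow hq.ne']

lemma le_squareFun (hq : 0 < q) (v : ℕ) (x : En n) : a v (dyadicIndex v x) ≤ squareFun q a x := by
  rw [← ENNReal.rpow_le_rpow_iff hq, squareFun_rpow hq]
  exact ENNReal.le_tsum v

lemma le_cubeMedian_squareFun (hq : 0 < q) (v : ℕ) (m : Fin n → ℤ) :
    a v m ≤ cubeMedian (squareFun q a) v m := by
  refine le_cubeMedian fun x hx => ?_
  rw [← mem_dyadicCube_iff.1 hx]
  exact le_squareFun hq v x

lemma squareFun_le_mul (hq : 0 < q) {c : ℝ≥0∞} {x : En n}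
    (h : ∀ v : ℕ, b v (dyadicIndex v x) ≤ c * a v (dyadicIndex v x)) :
    squareFun q b x ≤ c * squareFun q a x :=
  rpow_tsum_rpow_le_mul hq h

lemma squareFun_rpow_div {q₀ : ℝ} (hq : 0 < q) (hq₀ : 0 < q₀) (x : En n) :
    squareFun q₀ (fun v m => a v m ^ (q / q₀)) x = squareFun q a x ^ (q / q₀) := by
  simp only [squareFun, ← ENNReal.rpow_mul]
  congr 2 <;> field_simp

/-- Every cube has half of its mass in the set where `squareFun q a` is at most its median `M`, and
there `∑_v (a_v/M_v)^q ≤ 1`. -/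
lemma carlesonBound_div_cubeMedian_rpow {q₁ : ℝ} (hq : 0 < q) (hq₁ : 0 < q₁) :
    CarlesonBound q₁ 2 fun v m => (a v m / cubeMedian (squareFun q a) v m) ^ (q / q₁) := by
  set F := squareFun q a
  rw [← mul_one 2]
  refine carlesonBound_of_half_le
    (E := fun v : ℕ => {x | F x ≤ cubeMedian F v (dyadicIndex v x)})
    (fun v => measurableSet_le (measurable_squareFun q a) (measurable_cubeMedian_dyadicIndex F v))
    (fun v m => ?_) fun x => ?_
  · refine (half_le_volume_inter_le_cubeMedian (measurable_squareFun q a) v m).trans_eq ?_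
    congr 1 with x
    refine and_congr_right fun hx => ?_
    rw [mem_ofPred_eq, mem_ofPred_eq, mem_dyadicCube_iff.1 hx]
  · calc _ ≤ ∑' v : ℕ, (a v (dyadicIndex v x) / F x) ^ q := by
          refine ENNReal.tsum_le_tsum fun v => indicator_apply_le' (fun hx => ?_) fun _ => zero_le
          rw [← ENNReal.rpow_mul, div_mul_cancel₀ _ hq₁.ne']
          exact ENNReal.rpow_le_rpow (ENNReal.div_le_div_left hx _) hq.le
      _ = F x ^ q / F x ^ q := by
          simp_rw [ENNReal.div_rpow_of_nonneg _ _ hq.le, div_eq_mul_inv, ENNReal.tsum_mul_right,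
            ← squareFun_rpow hq a x, F]
      _ ≤ 1 := ENNReal.div_self_le_one

end SquareFun

section Factorization

variable {p p₀ : En n → ℝ} {θ q q₀ q₁ pmin c : ℝ}

lemma lintegral_squareFun_rpow_mul_rpow_le {a M : ℕ → (Fin n → ℤ) → ℝ≥0∞} {γ s t : ℝ}
    (hq : 0 < q) (hq₀ : 0 < q₀) (hγ : 0 ≤ γ) (hs : 0 ≤ s) (ht : 0 ≤ t) (hst : s + t = 1)
    (hp₀ : ∀ x, 0 ≤ p₀ x) (hp : Measurable p) (hps : ∀ x, q / q₀ * p₀ x = p x * s)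
    (hpt : ∀ x, γ * p₀ x = p x * t) :
    ∫⁻ x, squareFun q₀ (fun v m => a v m ^ (q / q₀) * M v m ^ γ) x ^ p₀ x ≤
      (∫⁻ x, squareFun q a x ^ p x) + ∫⁻ x, (⨆ v : ℕ, M v (dyadicIndex v x)) ^ p x := by
  rw [← lintegral_add_left ((measurable_squareFun q a).pow hp)]
  refine lintegral_mono fun x => ?_
  set S := ⨆ v : ℕ, M v (dyadicIndex v x)
  have pull_out : squareFun q₀ (fun v m => a v m ^ (q / q₀) * M v m ^ γ) x ≤
      S ^ γ * squareFun q a x ^ (q / q₀) := by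
    rw [← squareFun_rpow_div hq hq₀]
    refine squareFun_le_mul hq₀ fun v => ?_
    rw [mul_comm]
    gcongr
    exact le_iSup (fun v : ℕ => M v (dyadicIndex v x)) v
  calc squareFun q₀ (fun v m => a v m ^ (q / q₀) * M v m ^ γ) x ^ p₀ x
      ≤ (S ^ γ * squareFun q a x ^ (q / q₀)) ^ p₀ x := ENNReal.rpow_le_rpow pull_out (hp₀ x)
    _ = (squareFun q a x ^ p x) ^ s * (S ^ p x) ^ t := by
        rw [mul_comm, ENNReal.mul_rpow_of_nonneg _ _ (hp₀ x)]
        simp only [← ENNReal.rpow_mul, hps, hpt]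
    _ ≤ squareFun q a x ^ p x + S ^ p x := rpow_mul_rpow_le_add hs ht hst

/-- With `M` the medians of the square function of `a`, the factors are `a^{q/q₀} M^γ` and
`(a/M)^{q/q₁}`; the exponent `γ` is the one for which the powers of `M` cancel. -/
lemma GlobLogHolder.exists_factorization_of_modular_le (hp : GlobLogHolder c p)
    (hpmin : 0 < pmin) (hle : ∀ x, pmin ≤ p x) (hθ : θ ∈ Ioo (0 : ℝ) 1) (hq₀ : 0 < q₀)
    (hq₁ : 0 < q₁) (hq : 1 / q = (1 - θ) / q₀ + θ / q₁) (hp₀ : ∀ x, p₀ x = (1 - θ) * p x) :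
    ∃ K : ℝ≥0∞, 1 ≤ K ∧ K ≠ ∞ ∧ ∀ a : ℕ → (Fin n → ℤ) → ℝ≥0∞,
      ∫⁻ x, squareFun q a x ^ p x ≤ 1 → ∃ b₀ b₁ : ℕ → (Fin n → ℤ) → ℝ≥0∞,
        (∀ v m, b₀ v m ≠ ∞) ∧ (∀ v m, b₁ v m ≠ ∞) ∧
        (∀ v m, a v m = b₀ v m ^ (1 - θ) * b₁ v m ^ θ) ∧
        ∫⁻ x, squareFun q₀ b₀ x ^ p₀ x ≤ K ∧ CarlesonBound q₁ 2 b₁ := by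
  obtain ⟨hθ0, hθ1⟩ : 0 < θ ∧ 0 < 1 - θ := ⟨hθ.1, sub_pos.2 hθ.2⟩
  have q_pos : 0 < q := by rw [← one_div_pos, hq]; positivity
  obtain ⟨B, hB, maximal⟩ := hp.exists_lintegral_iSup_cubeMedian_le hpmin hle
  refine ⟨1 + B, le_self_add, by finiteness, fun a ha => ?_⟩
  have hp_meas : Measurable p := hp.1.continuous.measurable
  have hF_meas : Measurable (squareFun q a) := measurable_squareFun q a
  set M : ℕ → (Fin n → ℤ) → ℝ≥0∞ := fun v m => cubeMedian (squareFun q a) v m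
  have a_le_M (v : ℕ) (m : Fin n → ℤ) : a v m ≤ M v m := le_cubeMedian_squareFun q_pos v m
  have M_ne_top (v : ℕ) (m : Fin n → ℤ) : M v m ≠ ∞ :=
    cubeMedian_ne_top hpmin hle ha (hF_meas.pow hp_meas) v m
  have a_ne_top (v : ℕ) (m : Fin n → ℤ) : a v m ≠ ∞ :=
    ne_top_of_le_ne_top (M_ne_top v m) (a_le_M v m)
  have div_ne_top (v : ℕ) (m : Fin n → ℤ) : a v m / M v m ≠ ∞ :=
    ne_top_of_le_ne_top one_ne_top
      (ENNReal.div_le_of_le_mul ((a_le_M v m).trans_eq (one_mul _).symm))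
  have hr : 0 ≤ q / q₀ := by positivity
  have hu : 0 < q / q₁ := by positivity
  have hsum : (1 - θ) * (q / q₀) + θ * (q / q₁) = 1 := by
    calc (1 - θ) * (q / q₀) + θ * (q / q₁) = q * (1 / q) := by rw [hq]; ring
      _ = 1 := mul_one_div_cancel q_pos.ne'
  set γ := θ * (q / q₁) / (1 - θ)
  have hγ : 0 ≤ γ := by positivity
  have hγ_mul : γ * (1 - θ) = θ * (q / q₁) := div_mul_cancel₀ _ hθ1.ne'
  refine ⟨fun v m => a v m ^ (q / q₀) * M v m ^ γ, fun v m => (a v m / M v m) ^ (q / q₁),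
    fun v m => ENNReal.mul_ne_top (ENNReal.rpow_ne_top_of_nonneg hr (a_ne_top v m))
      (ENNReal.rpow_ne_top_of_nonneg hγ (M_ne_top v m)),
    fun v m => ENNReal.rpow_ne_top_of_nonneg hu.le (div_ne_top v m),
    fun v m => (rpow_mul_rpow_mul_div_rpow_eq_self hθ hr hu hsum (a_le_M v m) (M_ne_top v m)).symm,
    ?_, carlesonBound_div_cubeMedian_rpow q_pos hq₁⟩
  refine (lintegral_squareFun_rpow_mul_rpow_le q_pos hq₀ hγ (by positivity) (by positivity) hsum
    (fun x => ?_) hp_meas (fun x => ?_) fun x => ?_).trans (add_le_add ha (maximal _ hF_meas ha))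
  · rw [hp₀]
    exact mul_nonneg hθ1.le (hpmin.le.trans (hle x))
  · rw [hp₀]
    ring
  · rw [hp₀, ← mul_assoc, hγ_mul, mul_comm]

lemma GlobLogHolder.exists_factorization (hp : GlobLogHolder c p)
    (hpmin : 0 < pmin) (hle : ∀ x, pmin ≤ p x) (hθ : θ ∈ Ioo (0 : ℝ) 1) (hq₀ : 0 < q₀)
    (hq₁ : 0 < q₁) (hq : 1 / q = (1 - θ) / q₀ + θ / q₁) (hp₀ : ∀ x, p₀ x = (1 - θ) * p x)
    {A : ℝ≥0∞} (hA0 : A ≠ 0) (hA : A ≠ ∞) :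
    ∃ K : ℝ≥0∞, K ≠ ∞ ∧ ∀ (N : ℝ≥0∞) (a : ℕ → (Fin n → ℤ) → ℝ≥0∞), N ≠ 0 → N ≠ ∞ →
      luxNorm p (squareFun q a) ≤ A * N → ∃ b₀ b₁ : ℕ → (Fin n → ℤ) → ℝ≥0∞,
        (∀ v m, b₀ v m ≠ ∞) ∧ (∀ v m, b₁ v m ≠ ∞) ∧
        (∀ v m, a v m = N * (b₀ v m ^ (1 - θ) * b₁ v m ^ θ)) ∧
        luxNorm p₀ (squareFun q₀ b₀) ≤ K ∧ CarlesonBound q₁ 2 b₁ := by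
  obtain ⟨hθ0, hθ1⟩ : 0 < θ ∧ 0 < 1 - θ := ⟨hθ.1, sub_pos.2 hθ.2⟩
  have q_pos : 0 < q := by rw [← one_div_pos, hq]; positivity
  have hp_nonneg (x : En n) : 0 ≤ p x := hpmin.le.trans (hle x)
  have p₀_ge (x : En n) : (1 - θ) * pmin ≤ p₀ x := by rw [hp₀]; gcongr; exact hle x
  have hpmin₀ : 0 < (1 - θ) * pmin := by positivity
  obtain ⟨K, hK1, hK, factor⟩ :=
    hp.exists_factorization_of_modular_le hpmin hle hθ hq₀ hq₁ hq hp₀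
  set κ := (2 * A) ^ (1 - θ)⁻¹
  have κ_ne_zero : κ ≠ 0 := (ENNReal.rpow_pos (by positivity) (by finiteness)).ne'
  have κ_ne_top : κ ≠ ∞ := ENNReal.rpow_ne_top_of_nonneg (by positivity) (by finiteness)
  refine ⟨κ * K ^ ((1 - θ) * pmin)⁻¹,
    ENNReal.mul_ne_top κ_ne_top (ENNReal.rpow_ne_top_of_nonneg (by positivity) hK),
    fun N a hN0 hN ha => ?_⟩
  have R_ne_zero : 2 * A * N ≠ 0 := by positivity
  have R_ne_top : 2 * A * N ≠ ∞ := by finiteness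
  have modular_le : ∫⁻ x, squareFun q (fun v m => a v m / (2 * A * N)) x ^ p x ≤ 1 := by
    have norm_lt : luxNorm p (squareFun q a) < 2 * A * N := by
      rw [mul_assoc, two_mul]
      exact ha.trans_lt (ENNReal.lt_add_right (by finiteness) (by positivity))
    refine (lintegral_mono fun x => ENNReal.rpow_le_rpow ?_ (hp_nonneg x)).trans
      (lintegral_div_rpow_le_one_of_luxNorm_lt hp_nonneg norm_lt)
    rw [ENNReal.div_eq_inv_mul]
    exact squareFun_le_mul q_pos fun v => ENNReal.div_eq_inv_mul.le
  obtain ⟨b₀, b₁, hb₀, hb₁, hab, modular₀_le, carleson⟩ := factor _ modular_le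
  refine ⟨fun v m => κ * b₀ v m, b₁, fun v m => ENNReal.mul_ne_top κ_ne_top (hb₀ v m), hb₁,
    fun v m => ?_, ?_, carleson⟩
  · rw [ENNReal.mul_rpow_of_nonneg _ _ hθ1.le, ENNReal.rpow_inv_rpow hθ1.ne', mul_assoc (2 * A),
      ← hab, ← mul_assoc, mul_comm N, ENNReal.mul_div_cancel R_ne_zero R_ne_top]
  · have hp₀_nonneg (x : En n) : 0 ≤ p₀ x := hpmin₀.le.trans (p₀_ge x)
    refine (luxNorm_le_mul_luxNorm hp₀_nonneg κ_ne_zero κ_ne_top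
      fun x => squareFun_le_mul hq₀ fun v => le_rfl).trans ?_
    gcongr
    exact luxNorm_le_rpow hpmin₀ p₀_ge hK1 hK modular₀_le

end Factorization

/-- The real sequence whose corner coefficients are `b`. -/
def ofCornerCoeff (α : En n → ℝ) (b : ℕ → (Fin n → ℤ) → ℝ≥0∞) (v : ℕ) (m : Fin n → ℤ) : ℝ :=
  ((levelWeight α v (dyadicCorner v m))⁻¹ * b v m).toReal

section OfCornerCoeff

variable {α : En n → ℝ} {b : ℕ → (Fin n → ℤ) → ℝ≥0∞}

lemma ofReal_ofCornerCoeff (hb : ∀ v m, b v m ≠ ∞) (v : ℕ) (m : Fin n → ℤ) :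
    ENNReal.ofReal (ofCornerCoeff α b v m) = (levelWeight α v (dyadicCorner v m))⁻¹ * b v m :=
  ENNReal.ofReal_toReal
    (ENNReal.mul_ne_top (ENNReal.inv_ne_top.2 (levelWeight_ne_zero _ _ _)) (hb v m))

lemma cornerCoeff_ofCornerCoeff (hb : ∀ v m, b v m ≠ ∞) :
    cornerCoeff α (fun v m => (ofCornerCoeff α b v m : ℂ)) = b := by
  ext v m
  rw [cornerCoeff, ← ofReal_norm, Complex.norm_real,
    norm_of_nonneg (r := ofCornerCoeff α b v m) ENNReal.toReal_nonneg, ofReal_ofCornerCoeff hb,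
    ← mul_assoc,
    ENNReal.mul_inv_cancel (levelWeight_ne_zero _ _ _) (levelWeight_ne_top _ _ _), one_mul]

lemma enorm_eq_of_cornerCoeff_eq {α₀ α₁ : En n → ℝ} {θ : ℝ} (hθ : θ ∈ Ioo (0 : ℝ) 1)
    (hα : ∀ x, α x = (1 - θ) * α₀ x + θ * α₁ x) {lam : ℕ → (Fin n → ℤ) → ℂ} {N : ℝ≥0∞}
    {b₀ b₁ : ℕ → (Fin n → ℤ) → ℝ≥0∞} (hb₀ : ∀ v m, b₀ v m ≠ ∞) (hb₁ : ∀ v m, b₁ v m ≠ ∞)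
    {v : ℕ} {m : Fin n → ℤ} (h : cornerCoeff α lam v m = N * (b₀ v m ^ (1 - θ) * b₁ v m ^ θ)) :
    ‖lam v m‖ₑ = N * (ENNReal.ofReal (ofCornerCoeff α₀ b₀ v m) ^ (1 - θ) *
      ENNReal.ofReal (ofCornerCoeff α₁ b₁ v m) ^ θ) := by
  set x : En n := dyadicCorner v m with hx
  calc ‖lam v m‖ₑ = (levelWeight α v x)⁻¹ * cornerCoeff α lam v m := by
        rw [cornerCoeff, ← hx, ← mul_assoc,
          ENNReal.inv_mul_cancel (levelWeight_ne_zero _ _ _) (levelWeight_ne_top _ _ _), one_mul]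
    _ = (levelWeight α₀ v x)⁻¹ ^ (1 - θ) * (levelWeight α₁ v x)⁻¹ ^ θ *
          (N * (b₀ v m ^ (1 - θ) * b₁ v m ^ θ)) := by
        rw [h, levelWeight_eq_mul (hα x), ENNReal.inv_rpow, ENNReal.inv_rpow,
          ENNReal.mul_inv (.inr (ENNReal.rpow_ne_top_of_nonneg hθ.1.le (levelWeight_ne_top _ _ _)))
            (.inl (ENNReal.rpow_ne_top_of_nonneg (sub_pos.2 hθ.2).le (levelWeight_ne_top _ _ _)))]
    _ = _ := by
        rw [ofReal_ofCornerCoeff hb₀, ofReal_ofCornerCoeff hb₁,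
          ENNReal.mul_rpow_of_nonneg _ _ (sub_pos.2 hθ.2).le,
          ENNReal.mul_rpow_of_nonneg _ _ hθ.1.le]
        ring

end OfCornerCoeff

lemma exists_pos_le_ofReal {a : ℝ≥0∞} (ha : a ≠ ∞) : ∃ C : ℝ, 0 < C ∧ a ≤ ENNReal.ofReal C :=
  ⟨a.toReal + 1, by positivity,
    (ENNReal.ofReal_toReal ha).symm.trans_le (ENNReal.ofReal_le_ofReal (by linarith))⟩

theorem stmt13_general {θ : ℝ} (hθ : θ ∈ Ioo (0 : ℝ) 1) {q₀ q₁ q : ℝ} (hq₀ : 0 < q₀) (hq₁ : 0 < q₁)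
    {p₀ α₀ α₁ p α : En n → ℝ} (hp₀ : ∃ c, GlobLogHolder c p₀)
    (hp₀b : ∃ b : ℝ, 0 < b ∧ ∀ x, b ≤ p₀ x)
    (hα₀ : ∃ c, LocLogHolder c α₀) (hα₁ : ∃ c, LocLogHolder c α₁)
    (hp : ∀ x, 1 / p x = (1 - θ) / p₀ x) (hq : 1 / q = (1 - θ) / q₀ + θ / q₁)
    (hα : ∀ x, α x = (1 - θ) * α₀ x + θ * α₁ x) :
    ∃ C : ℝ, 0 < C ∧ ∀ lam : ℕ → (Fin n → ℤ) → ℂ,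
      seqNorm α p (fun _ => q) lam ≠ 0 → seqNorm α p (fun _ => q) lam ≠ ∞ →
      ∃ lam0 lam1 : ℕ → (Fin n → ℤ) → ℝ,
        (∀ (j : ℕ) (m : Fin n → ℤ), 0 ≤ lam0 j m) ∧
        (∀ (j : ℕ) (m : Fin n → ℤ), 0 ≤ lam1 j m) ∧
        (∀ (j : ℕ) (m : Fin n → ℤ),
          ENNReal.ofReal ‖lam j m‖ ≤
            seqNorm α p (fun _ => q) lam *
              (ENNReal.ofReal (lam0 j m) ^ (1 - θ) * ENNReal.ofReal (lam1 j m) ^ θ)) ∧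
        seqNorm α₀ p₀ (fun _ => q₀) (fun j m => (lam0 j m : ℂ)) ≤ ENNReal.ofReal C ∧
        seqNormInf α₁ q₁ (fun j m => (lam1 j m : ℂ)) ≤ ENNReal.ofReal C := by
  obtain ⟨hθ0, hθ1⟩ : 0 < θ ∧ 0 < 1 - θ := ⟨hθ.1, sub_pos.2 hθ.2⟩
  obtain ⟨_, hp₀⟩ := hp₀
  obtain ⟨_, hα₀⟩ := hα₀
  obtain ⟨_, hα₁⟩ := hα₁
  obtain ⟨pmin, hpmin, hp₀_ge⟩ := hp₀b
  obtain rfl : p = fun x => (1 - θ)⁻¹ * p₀ x := funext fun x => by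
    rw [← inv_inj, ← one_div, hp, mul_inv, inv_inv, div_eq_mul_inv]
  obtain rfl : α = fun x => (1 - θ) * α₀ x + θ * α₁ x := funext hα
  have q_pos : 0 < q := by rw [← one_div_pos, hq]; positivity
  have hp₀_nonneg (x : En n) : 0 ≤ p₀ x := hpmin.le.trans (hp₀_ge x)
  have hp_ge (x : En n) : (1 - θ)⁻¹ * pmin ≤ (1 - θ)⁻¹ * p₀ x := by gcongr; exact hp₀_ge x
  obtain ⟨A, hA0, hA, corner_le⟩ :=
    ((hα₀.const_mul hθ1).add (hα₁.const_mul hθ0)).exists_luxNorm_squareFun_cornerCoeff_le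
      (fun x => mul_nonneg (inv_nonneg.2 hθ1.le) (hp₀_nonneg x)) q_pos
  obtain ⟨A₀, hA₀, norm₀_le⟩ := hα₀.exists_seqNorm_le_mul_luxNorm_squareFun hp₀_nonneg hq₀
  obtain ⟨A₁, hA₁, norm₁_le⟩ := hα₁.exists_seqNormInf_le_of_carlesonBound hq₁
  obtain ⟨K, hK, factor⟩ := (hp₀.const_mul (inv_pos.2 hθ1)).exists_factorization (by positivity)
    hp_ge hθ hq₀ hq₁ hq (fun x => (mul_inv_cancel_left₀ hθ1.ne' _).symm) hA0 hA
  obtain ⟨C, hC, le_C⟩ := exists_pos_le_ofReal (a := A₀ * K + A₁ * 2 ^ (1 / q₁)) (by finiteness)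
  refine ⟨C, hC, fun lam hN0 hN => ?_⟩
  obtain ⟨b₀, b₁, hb₀, hb₁, hab, hb₀_le, hb₁_le⟩ := factor _ _ hN0 hN (corner_le lam)
  rw [← cornerCoeff_ofCornerCoeff (α := α₀) hb₀] at hb₀_le
  rw [← cornerCoeff_ofCornerCoeff (α := α₁) hb₁] at hb₁_le
  refine ⟨ofCornerCoeff α₀ b₀, ofCornerCoeff α₁ b₁, fun _ _ => ENNReal.toReal_nonneg,
    fun _ _ => ENNReal.toReal_nonneg, fun v m => ?_,
    (norm₀_le _).trans ((mul_le_mul_right hb₀_le A₀).trans (le_self_add.trans le_C)),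
    (norm₁_le _ _ hb₁_le).trans (le_add_self.trans le_C)⟩
  exact ((ofReal_norm _).trans
    (enorm_eq_of_cornerCoeff_eq hθ (fun _ => rfl) hb₀ hb₁ (hab v m))).le

end

/-- Step 2 of Theorem `calderon-prod2`: factorization of an arbitrary
element of `f^{α(·)}_{p(·),q}` through `f^{α₀(·)}_{p₀(·),q₀}` and `f^{α₁(·)}_{∞,q₁}`. -/
theorem stmt13 {n : ℕ} (θ : ℝ) (hθ : θ ∈ Set.Ioo (0 : ℝ) 1)
    (q₀ q₁ q : ℝ) (hq₀ : 1 ≤ q₀) (hq₁ : 1 ≤ q₁)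
    (p₀ α₀ α₁ p α : En n → ℝ)
    (hp₀ : ∃ c, GlobLogHolder c p₀)
    (hp₀b : ∃ b : ℝ, ∀ x, 1 ≤ p₀ x ∧ p₀ x ≤ b)
    (hα₀ : ∃ c, LocLogHolder c α₀) (hα₁ : ∃ c, LocLogHolder c α₁)
    (hp : ∀ x, 1 / p x = (1 - θ) / p₀ x)
    (hq : 1 / q = (1 - θ) / q₀ + θ / q₁)
    (hα : ∀ x, α x = (1 - θ) * α₀ x + θ * α₁ x) :
    ∃ C : ℝ, 0 < C ∧ ∀ lam : ℕ → (Fin n → ℤ) → ℂ,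
      seqNorm α p (fun _ => q) lam ≠ 0 → seqNorm α p (fun _ => q) lam ≠ ∞ →
      ∃ lam0 lam1 : ℕ → (Fin n → ℤ) → ℝ,
        (∀ (j : ℕ) (m : Fin n → ℤ), 0 ≤ lam0 j m) ∧
        (∀ (j : ℕ) (m : Fin n → ℤ), 0 ≤ lam1 j m) ∧
        (∀ (j : ℕ) (m : Fin n → ℤ),
          ENNReal.ofReal ‖lam j m‖ ≤
            seqNorm α p (fun _ => q) lam *
              (ENNReal.ofReal (lam0 j m) ^ (1 - θ) * ENNReal.ofReal (lam1 j m) ^ θ)) ∧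
        seqNorm α₀ p₀ (fun _ => q₀) (fun j m => (lam0 j m : ℂ)) ≤ ENNReal.ofReal C ∧
        seqNormInf α₁ q₁ (fun j m => (lam1 j m : ℂ)) ≤ ENNReal.ofReal C :=
  stmt13_general hθ (zero_lt_one.trans_le hq₀) (zero_lt_one.trans_le hq₁) hp₀
    (hp₀b.elim fun _ h => ⟨1, one_pos, fun x => (h x).1⟩) hα₀ hα₁ hp hq hα
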